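/- arXiv:0807.0564 — 4 statements merged into one kernel-verified Lean document; each statement's English description precedes it below -/
import Mathlib

section
/- If (ḡ, p) ∈ Q and every coordinate of p is an integer, then there exists a valid configuration x ∈ B such that ḡ = Ξ̄(x) and p = p^x (the indicator vector of x); in particular every integral point of Q corresponds to a valid configuration. -/
/-!
Nonnegative integers with sum `1` are all `0` except for a single `1`, so an integral `p j` is
concentrated on one local word `c j`. Its marginal at a coordinate `i` is then the unit vector at
`c j i`; since this marginal is `g i` for every `j` whose domain contains `i`, the local words agree
on overlaps and glue to a configuration.
-/

open Finset

theorem exists_eq_pi_single_of_sum_eq_one {ι R : Type*} [Fintype ι] [DecidableEq ι] [Ring R]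
    [PartialOrder R] [IsOrderedRing R] [Nontrivial R] {q : ι → R} (hnonneg : ∀ i, 0 ≤ q i)
    (hsum : ∑ i, q i = 1) (hint : ∀ i, ∃ z : ℤ, q i = z) : ∃ c, q = Pi.single c 1 := by
  choose z hz using hint
  lift z to ι → ℕ using fun i ↦ Int.cast_nonneg_iff.mp (hz i ▸ hnonneg i)
  obtain rfl : q = fun i ↦ (z i : R) := funext fun i ↦ by simpa using hz i
  have := IsOrderedRing.toCharZero (R := R)
  have hz_sum : ∑ i, z i = 1 := Nat.cast_injective (R := R) <| by simpa using hsum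
  obtain ⟨c, hc⟩ := (Finsupp.sum_eq_one_iff (Finsupp.equivFunOnFinite.symm z)).mp <| by
    simpa [Finsupp.sum_fintype] using hz_sum
  refine ⟨c, funext fun i ↦ ?_⟩
  have hzi : z i = Finsupp.single c 1 i := DFunLike.congr_fun hc i
  simp [hzi, Finsupp.single_apply, Pi.single_apply, eq_comm]

theorem sum_ite_eq_pi_single {β α R : Type*} [Fintype β] [DecidableEq β] [DecidableEq α]
    [AddCommMonoid R] (f : β → α) (c : β) (r : R) (a : α) :
    ∑ b, (if f b = a then (Pi.single c r : β → R) b else 0) = (Pi.single (f c) r : α → R) a := by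
  rw [Fintype.sum_eq_single c fun b hb ↦ by simp [hb]]
  simp [Pi.single_apply, eq_comm]

theorem pi_single_left_injective {ι R : Type*} [DecidableEq ι] [Zero R] {r : R} (hr : r ≠ 0) :
    Function.Injective fun i : ι ↦ (Pi.single i r : ι → R) := fun i j h ↦ by
  simpa [Pi.single_apply, hr] using congrFun h i

theorem exists_forall_domRestrict_eq {I L : Type*} {A : I → Type*} {S : L → Set I}
    (hcover : ∀ i, ∃ j, i ∈ S j) (c : ∀ j, ∀ i : S j, A i)
    (hagree : ∀ j k i (hj : i ∈ S j) (hk : i ∈ S k), c j ⟨i, hj⟩ = c k ⟨i, hk⟩) :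
    ∃ x : ∀ i, A i, ∀ j, (S j).domRestrict x = c j := by
  choose k hk using hcover
  exact ⟨fun i ↦ c (k i) ⟨i, hk i⟩, fun j ↦ funext fun i ↦ hagree (k i) j i (hk i) i.2⟩

theorem stmt_9_general {I L R : Type*} {A : I → Type*} [∀ i, DecidableEq (A i)] [Ring R]
    [PartialOrder R] [IsOrderedRing R] [Nontrivial R] {S : L → Set I}
    [∀ j, DecidableEq (∀ i : S j, A i)] (hcover : ∀ i, ∃ j, i ∈ S j)
    (B : ∀ j, Finset (∀ i : S j, A i)) (g : ∀ i, A i → R) (p : ∀ j, B j → R)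
    (hnonneg : ∀ j b, 0 ≤ p j b) (hsum : ∀ j, ∑ b, p j b = 1)
    (hmarginal : ∀ j i (hi : i ∈ S j) (α : A i),
      g i α = ∑ b, if b.1 ⟨i, hi⟩ = α then p j b else 0)
    (hint : ∀ j b, ∃ z : ℤ, p j b = z) :
    ∃ (x : ∀ i, A i) (hx : ∀ j, (S j).domRestrict x ∈ B j),
      (∀ i, g i = Pi.single (x i) 1) ∧ ∀ j, p j = Pi.single ⟨(S j).domRestrict x, hx j⟩ 1 := by
  choose c hc using fun j ↦ exists_eq_pi_single_of_sum_eq_one (hnonneg j) (hsum j) (hint j)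
  have hg : ∀ j i (hi : i ∈ S j), g i = Pi.single ((c j).1 ⟨i, hi⟩) 1 := fun j i hi ↦
    funext fun α ↦ by
      rw [hmarginal j i hi, hc j]
      exact sum_ite_eq_pi_single (fun b : B j ↦ b.1 ⟨i, hi⟩) (c j) 1 α
  obtain ⟨x, hx⟩ := exists_forall_domRestrict_eq hcover (fun j ↦ (c j).1) fun j k i hj hk ↦
    pi_single_left_injective one_ne_zero ((hg j i hj).symm.trans (hg k i hk))
  refine ⟨x, fun j ↦ hx j ▸ (c j).2, fun i ↦ ?_, fun j ↦ ?_⟩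
  · obtain ⟨j, hi⟩ := hcover i
    rw [hg j i hi, ← hx j, Set.domRestrict_apply]
  · simp only [hc j, hx j]

/-- If `(ḡ, p) ∈ Q` and every coordinate of `p` is an integer,
then there exists a valid configuration `x ∈ B` such that `ḡ = Ξ̄(x)` and
`p = p^x` (the indicator vector of `x`); in particular every integral point of
`Q` corresponds to a valid configuration. -/
theorem stmt_9
    {I : Type} [Fintype I] [DecidableEq I]
    (A : I → Type) [∀ i, Fintype (A i)] [∀ i, DecidableEq (A i)]
    (hcard : ∀ i, 2 ≤ Fintype.card (A i))
    {L : Type} [Fintype L]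
    (Ij : L → Finset I) (hIj : ∀ j, (Ij j).Nonempty)
    (Bj : ∀ j : L, Finset (∀ i : Ij j, A i.1))
    -- every variable node is connected to at least one non-pendant factor node
    (hJ : ∀ i : I, ∃ j : L, i ∈ Ij j)
    (B : Set (∀ i, A i))
    (hB : B = {x | ∀ j : L, (fun i : Ij j => x i.1) ∈ Bj j})
    -- the mapping Ξ̄
    (Xibar : (∀ i, A i) → ∀ i : I, A i → ℝ)
    (hXibar : ∀ x (i : I) (γ : A i), Xibar x i γ = if γ = x i then 1 else 0)
    -- a point (ḡ, p) of Q
    (g : ∀ i : I, A i → ℝ)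
    (p : ∀ j : L, {b // b ∈ Bj j} → ℝ)
    (hp0 : ∀ j b, 0 ≤ p j b)
    (hp1 : ∀ j : L, ∑ b : Bj j, p j b = 1)
    (hg : ∀ (j : L) (i : I) (hij : i ∈ Ij j) (α : A i),
      g i α = ∑ b : Bj j, if b.1 ⟨i, hij⟩ = α then p j b else 0)
    -- every coordinate of p is an integer
    (hint : ∀ (j : L) (b : Bj j), ∃ z : ℤ, p j b = z) :
    ∃ x ∈ B, g = Xibar x ∧
      ∀ (j : L) (b : Bj j),
        p j b = if b.1 = (fun i : Ij j => x i.1) then 1 else 0 := by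
  obtain ⟨x, hx, hgx, hpx⟩ := stmt_9_general (S := fun j ↦ Ij j) hJ Bj g p hp0 hp1 hg hint
  exact ⟨x, hB ▸ hx, funext₂ fun i γ ↦ by rw [hgx, hXibar, Pi.single_apply],
    fun j b ↦ by simp only [hpx, Pi.single_apply, Subtype.ext_iff]; rfl⟩
end

section
/- (Optimum certificate property.) Suppose (ḡ*, p*) ∈ Q maximizes the cost λ·g over Q and all coordinates of (ḡ*, p*) are integers. Then ḡ* = Ξ̄(x*) for some x* ∈ B, and x* maximizes Σ_{i∈Y} log h_i(x_i) over all x ∈ B; that is, the integral LP output is the optimum configuration. -/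
open Finset

/-!
An integral point of a standard simplex is a vertex, so each `p j` selects a single local
configuration `b j`, and the marginal constraints say that `g i` is the vertex `b j i` of the
simplex over `A i` for every factor `j` involving `i`. As `g i` does not depend on `j`, the `b j`
agree on shared variables and glue to a configuration `x` with `g = Ξ̄(x)`. Conversely every
configuration in the global behaviour extends to a point of the polytope whose cost is its
objective value, so optimality over the polytope yields optimality over the behaviour.
-/

theorem exists_eq_single_of_mem_stdSimplex {R β : Type*} [Ring R] [PartialOrder R]
    [IsStrictOrderedRing R] [Fintype β] [DecidableEq β] {p : β → R}
    (hp : p ∈ stdSimplex R β) (hint : ∀ b, ∃ z : ℤ, p b = z) : ∃ b, p = Pi.single b 1 := by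
  choose z hz using hint
  obtain rfl : p = fun b ↦ (z b : R) := funext hz
  have hz_nonneg : ∀ b, 0 ≤ z b := fun b ↦ Int.cast_nonneg_iff.mp (hp.1 b)
  lift z to β → ℕ using hz_nonneg
  have hsum : ∑ b, z b = 1 := by
    have hsum_cast : ∑ b, ((z b : ℤ) : R) = 1 := hp.2
    exact_mod_cast hsum_cast
  obtain ⟨b, hb⟩ := (Finsupp.sum_eq_one_iff (Finsupp.equivFunOnFinite.symm z)).mp
    ((Finsupp.equivFunOnFinite_symm_sum z).trans hsum)
  refine ⟨b, funext fun c ↦ ?_⟩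
  have hc : z c = Finsupp.single b 1 c := DFunLike.congr_fun hb c
  simp [hc, Finsupp.single_apply, Pi.single_apply, eq_comm]

theorem exists_restrict_eq_of_agree {I L : Type*} {A : I → Type*} {S : L → Finset I}
    (hS : ∀ i, ∃ j, i ∈ S j) (b : ∀ j, ∀ i : S j, A i)
    (hb : ∀ j k i (hj : i ∈ S j) (hk : i ∈ S k), b j ⟨i, hj⟩ = b k ⟨i, hk⟩) :
    ∃ x : ∀ i, A i, ∀ j, (S j).restrict x = b j := by
  choose k hk using hS
  exact ⟨fun i ↦ b (k i) ⟨i, hk i⟩, fun j ↦ funext fun i ↦ hb (k i) j i (hk i) i.2⟩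

/-- The global behaviour cut out by the local behaviours `B j` on the coordinates in `S j`: the
configurations all of whose restrictions are locally allowed. -/
def globalBehaviour {I L : Type*} {A : I → Type*} (S : L → Finset I)
    (B : ∀ j, Finset (∀ i : S j, A i)) : Set (∀ i, A i) :=
  {x | ∀ j, (S j).restrict x ∈ B j}

/-- The embedding `Ξ̄` of configurations into real vectors (here over any `R`): each letter `x i`
becomes a vertex of the standard simplex over the alphabet `A i`. -/
def indicatorVector (R : Type*) [Zero R] [One R] {I : Type*} {A : I → Type*}
    [∀ i, DecidableEq (A i)] (x : ∀ i, A i) : ∀ i, A i → R :=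
  fun i ↦ Pi.single (x i) 1

/-- The polytope `Q` of the linear programming relaxation: pairs `(g, p)` of a probability vector
`p j` on each local behaviour `B j` and common single-variable marginals `g i`. The marginal of
`p j` at `i` is encoded as its pushforward along evaluation at `i`. -/
def lpPolytope (R : Type*) [Semiring R] [PartialOrder R] {I L : Type*} {A : I → Type*}
    [∀ i, Finite (A i)] (S : L → Finset I) (B : ∀ j, Finset (∀ i : S j, A i)) :
    Set ((∀ i, A i → R) × (∀ j, B j → R)) :=
  {gp | (∀ j, gp.2 j ∈ stdSimplex R (B j)) ∧
    ∀ j, ∀ i : S j, gp.1 i = FunOnFinite.map (fun b : B j ↦ b.1 i) (gp.2 j)}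

section

variable {R : Type*} {I L : Type*} {A : I → Type*} [∀ i, DecidableEq (A i)]
  {S : L → Finset I} {B : ∀ j, Finset (∀ i : S j, A i)}

theorem lpPolytope_eq_setOf [Semiring R] [PartialOrder R] [∀ i, Finite (A i)] :
    lpPolytope R S B = {gp | (∀ j b, 0 ≤ gp.2 j b) ∧ (∀ j, ∑ b : B j, gp.2 j b = 1) ∧
      ∀ j i (hij : i ∈ S j) α,
        gp.1 i α = ∑ b : B j, if b.1 ⟨i, hij⟩ = α then gp.2 j b else 0} := by
  ext gp
  simp only [lpPolytope, stdSimplex, Set.mem_ofPred_eq, forall_and, and_assoc, Subtype.forall,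
    funext_iff, FunOnFinite.map_apply_apply, sum_filter]

theorem fst_eq_single_of_mem_lpPolytope [Semiring R] [PartialOrder R] [∀ i, Finite (A i)]
    {g : ∀ i, A i → R} {p : ∀ j, B j → R} (hgp : (g, p) ∈ lpPolytope R S B) {j : L} {b : B j}
    (hb : p j = Pi.single b 1) (i : S j) : g i = Pi.single (b.1 i) 1 := by
  calc g i = FunOnFinite.map (fun c : B j ↦ c.1 i) (p j) := hgp.2 j i
    _ = Pi.single (b.1 i) 1 := by rw [hb, FunOnFinite.map_piSingle]

theorem indicatorVector_mem_lpPolytope [Semiring R] [PartialOrder R] [ZeroLEOneClass R]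
    [∀ i, Finite (A i)] {x : ∀ i, A i} (hx : x ∈ globalBehaviour S B) :
    (indicatorVector R x, fun j ↦ Pi.single ⟨(S j).restrict x, hx j⟩ 1) ∈ lpPolytope R S B :=
  ⟨fun _ ↦ single_mem_stdSimplex R _, fun j i ↦
    (FunOnFinite.map_piSingle (fun b : B j ↦ b.1 i) ⟨(S j).restrict x, hx j⟩ 1).symm⟩

theorem exists_eq_indicatorVector_of_mem_lpPolytope [Ring R] [PartialOrder R]
    [IsStrictOrderedRing R] [∀ i, Finite (A i)] (hS : ∀ i, ∃ j, i ∈ S j)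
    {g : ∀ i, A i → R} {p : ∀ j, B j → R} (hgp : (g, p) ∈ lpPolytope R S B)
    (hint : ∀ j b, ∃ z : ℤ, p j b = z) : ∃ x ∈ globalBehaviour S B, g = indicatorVector R x := by
  choose b hb using fun j ↦ exists_eq_single_of_mem_stdSimplex (hgp.1 j) (hint j)
  have hg : ∀ j, ∀ i : S j, g i = Pi.single ((b j).1 i) 1 := fun j ↦
    fst_eq_single_of_mem_lpPolytope hgp (hb j)
  have hagree : ∀ j k i (hj : i ∈ S j) (hk : i ∈ S k),
      (b j).1 ⟨i, hj⟩ = (b k).1 ⟨i, hk⟩ := fun j k i hj hk ↦ by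
    have h := congrFun ((hg j ⟨i, hj⟩).symm.trans (hg k ⟨i, hk⟩)) ((b j).1 ⟨i, hj⟩)
    by_contra hne
    simp [hne] at h
  obtain ⟨x, hx⟩ := exists_restrict_eq_of_agree hS (fun j ↦ (b j).1) hagree
  refine ⟨x, fun j ↦ hx j ▸ (b j).2, funext fun i ↦ ?_⟩
  obtain ⟨j, hij⟩ := hS i
  rw [hg j ⟨i, hij⟩, ← hx j]
  rfl

theorem sum_dotProduct_indicatorVector [NonAssocSemiring R] [∀ i, Fintype (A i)] (Y : Finset I)
    (w : ∀ i, A i → R) (x : ∀ i, A i) :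
    ∑ i ∈ Y, w i ⬝ᵥ indicatorVector R x i = ∑ i ∈ Y, w i (x i) :=
  sum_congr rfl fun i _ ↦ dotProduct_single_one (w i) (x i)

theorem stmt_10_general [Ring R] [PartialOrder R] [IsStrictOrderedRing R] [∀ i, Fintype (A i)]
    (hS : ∀ i, ∃ j, i ∈ S j) (Y : Finset I) (w : ∀ i, A i → R)
    {g : ∀ i, A i → R} {p : ∀ j, B j → R} (hgp : (g, p) ∈ lpPolytope R S B)
    (hmax : IsMaxOn (fun gp ↦ ∑ i ∈ Y, w i ⬝ᵥ gp.1 i) (lpPolytope R S B) (g, p))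
    (hint : ∀ j b, ∃ z : ℤ, p j b = z) :
    ∃ x ∈ globalBehaviour S B, g = indicatorVector R x ∧
      IsMaxOn (fun x ↦ ∑ i ∈ Y, w i (x i)) (globalBehaviour S B) x := by
  obtain ⟨x, hx, rfl⟩ := exists_eq_indicatorVector_of_mem_lpPolytope hS hgp hint
  refine ⟨x, hx, rfl, fun y hy ↦ ?_⟩
  have hle : ∑ i ∈ Y, w i ⬝ᵥ indicatorVector R y i ≤ ∑ i ∈ Y, w i ⬝ᵥ indicatorVector R x i :=
    hmax (indicatorVector_mem_lpPolytope hy)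
  rwa [sum_dotProduct_indicatorVector, sum_dotProduct_indicatorVector] at hle

end

/-- Optimum certificate property: Suppose `(ḡ*, p*) ∈ Q`
maximizes the cost `λ·g` over `Q` and all coordinates of `(ḡ*, p*)` are
integers. Then `ḡ* = Ξ̄(x*)` for some `x* ∈ B`, and `x*` maximizes
`Σ_{i∈Y} log h_i(x_i)` over all `x ∈ B`; that is, the integral LP output is
the optimum configuration. -/
theorem stmt_10
    {I : Type} [Fintype I] [DecidableEq I]
    (A : I → Type) [∀ i, Fintype (A i)] [∀ i, DecidableEq (A i)]
    (hcard : ∀ i, 2 ≤ Fintype.card (A i))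
    {L : Type} [Fintype L]
    (Ij : L → Finset I) (hIj : ∀ j, (Ij j).Nonempty)
    (Bj : ∀ j : L, Finset (∀ i : Ij j, A i.1))
    -- every variable node is connected to at least one non-pendant factor node
    (hJ : ∀ i : I, ∃ j : L, i ∈ Ij j)
    (B : Set (∀ i, A i))
    (hB : B = {x | ∀ j : L, (fun i : Ij j => x i.1) ∈ Bj j})
    (hBne : B.Nonempty)
    (Y : Finset I)
    (h : ∀ i, A i → ℝ) (hpos : ∀ i ∈ Y, ∀ a, 0 < h i a)
    -- the mapping Ξ̄
    (Xibar : (∀ i, A i) → ∀ i : I, A i → ℝ)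
    (hXibar : ∀ x (i : I) (γ : A i), Xibar x i γ = if γ = x i then 1 else 0)
    -- the polytope Q, as a set of pairs (ḡ, p)
    (Q : Set ((∀ i : I, A i → ℝ) × (∀ j : L, {b // b ∈ Bj j} → ℝ)))
    (hQ : Q = {gp | (∀ j b, 0 ≤ gp.2 j b)
      ∧ (∀ j : L, ∑ b : Bj j, gp.2 j b = 1)
      ∧ (∀ (j : L) (i : I) (hij : i ∈ Ij j) (α : A i),
          gp.1 i α = ∑ b : Bj j, if b.1 ⟨i, hij⟩ = α then gp.2 j b else 0)})
    -- the cost functional λ·g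
    (cost : (∀ i : I, A i → ℝ) → ℝ)
    (hcost : ∀ g, cost g = ∑ i ∈ Y, ∑ α : A i, Real.log (h i α) * g i α)
    -- the LP optimum (ḡ*, p*)
    (gstar : ∀ i : I, A i → ℝ)
    (pstar : ∀ j : L, {b // b ∈ Bj j} → ℝ)
    (hmem : (gstar, pstar) ∈ Q)
    (hmax : ∀ gp ∈ Q, cost gp.1 ≤ cost gstar)
    -- all coordinates of (ḡ*, p*) are integers
    (hgint : ∀ (i : I) (α : A i), ∃ z : ℤ, gstar i α = z)
    (hpint : ∀ (j : L) (b : Bj j), ∃ z : ℤ, pstar j b = z) :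
    ∃ xstar ∈ B, gstar = Xibar xstar ∧
      ∀ x ∈ B, (∑ i ∈ Y, Real.log (h i (x i)))
        ≤ ∑ i ∈ Y, Real.log (h i (xstar i)) := by
  obtain rfl : Xibar = indicatorVector ℝ :=
    funext₃ fun x i γ ↦ (hXibar x i γ).trans (Pi.single_apply _ _ _).symm
  rw [← lpPolytope_eq_setOf] at hQ
  subst hB hQ
  obtain rfl : cost = fun g ↦ ∑ i ∈ Y, (fun α ↦ Real.log (h i α)) ⬝ᵥ g i := funext hcost
  exact stmt_10_general hJ Y (fun i α ↦ Real.log (h i α)) hmem hmax hpint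
end

section
/- (Theorem 1, equivalence of the two relaxed LPs.) For every (g̃, p) ∈ Q̃ with (ḡ, p) = V(g̃, p) ∈ Q, the costs satisfy λ̃·g̃ = λ·g − Σ_{i∈Y} log h_i(α_i); consequently (g̃*, p*) maximizes λ̃·g̃ over Q̃ if and only if V(g̃*, p*) maximizes λ·g over Q, and (g̃*, p*) is integral if and only if V(g̃*, p*) is integral. Hence the two linear programs produce the same output (configuration or failure). -/
open Finset

/-!
The total mass `1` of a local weight `p j` passes to each of its marginals, so a marginal is
determined by its values off the omitted symbol `α₀ i`. Hence `V` restores exactly what the reduced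
linear program forgets: it maps `Q̃` onto `Q`, with the forgetful map as a section. Substituting
`1 - ∑ g̃` for the omitted coordinate changes the cost by a constant, so maximizers correspond, and
expresses every coordinate of `V (g̃, p)` as an integer combination of `1` and coordinates of
`(g̃, p)`, so integrality corresponds as well.
-/

section SumOne

variable {A R : Type*} [Fintype A] [DecidableEq A] {a₀ : A}

/-- The function of total mass one on `A` that takes the values `g` off `a₀`. -/
def extendToSumOne [AddCommGroupWithOne R] (a₀ : A) (g : {a // a ≠ a₀} → R) (a : A) : R :=
  if ha : a = a₀ then 1 - ∑ b, g b else g ⟨a, ha⟩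

section AddCommGroupWithOne

variable [AddCommGroupWithOne R]

theorem extendToSumOne_self (g : {a // a ≠ a₀} → R) :
    extendToSumOne a₀ g a₀ = 1 - ∑ a, g a :=
  dif_pos rfl

theorem extendToSumOne_coe (g : {a // a ≠ a₀} → R) (a : {a // a ≠ a₀}) :
    extendToSumOne a₀ g a = g a :=
  dif_neg a.2

theorem extendToSumOne_eq_of_sum_eq_one {f : A → R} {g : {a // a ≠ a₀} → R}
    (hf : ∑ a, f a = 1) (hfg : ∀ a : {a // a ≠ a₀}, g a = f a) : extendToSumOne a₀ g = f := by
  funext a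
  by_cases ha : a = a₀
  · subst ha
    rw [extendToSumOne_self, ← hf, Fintype.sum_eq_add_sum_subtype_ne f a,
      Fintype.sum_congr _ _ hfg, add_sub_cancel_right]
  · exact (extendToSumOne_coe g ⟨a, ha⟩).trans (hfg ⟨a, ha⟩)

theorem forall_extendToSumOne_mem_iff {S : AddSubgroup R} (hS : 1 ∈ S)
    {g : {a // a ≠ a₀} → R} : (∀ a, extendToSumOne a₀ g a ∈ S) ↔ ∀ a, g a ∈ S := by
  refine ⟨fun hg a ↦ extendToSumOne_coe g a ▸ hg a, fun hg a ↦ ?_⟩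
  unfold extendToSumOne
  split_ifs with ha
  · exact sub_mem hS (sum_mem fun b _ ↦ hg b)
  · exact hg ⟨a, ha⟩

end AddCommGroupWithOne

theorem sum_sub_mul_eq_sum_mul_extendToSumOne_sub [Ring R] (w : A → R)
    (g : {a // a ≠ a₀} → R) :
    ∑ a : {a // a ≠ a₀}, (w a - w a₀) * g a = ∑ a, w a * extendToSumOne a₀ g a - w a₀ := by
  simp only [Fintype.sum_eq_add_sum_subtype_ne _ a₀, extendToSumOne_self, extendToSumOne_coe,
    sub_mul, sum_sub_distrib, ← mul_sum, mul_sub, mul_one]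
  abel

end SumOne

section Marginal

variable {A B R : Type*} [DecidableEq A] [Fintype B] [AddCommMonoid R]

/-- The marginal of the weight `p` along `f`, that is, its push-forward. -/
def marginal (f : B → A) (p : B → R) (a : A) : R :=
  ∑ b, if f b = a then p b else 0

theorem sum_marginal [Fintype A] (f : B → A) (p : B → R) :
    ∑ a, marginal f p a = ∑ b, p b := by
  simp only [marginal]
  rw [sum_comm]
  simp only [sum_ite_eq, mem_univ, if_true]

theorem marginal_mem {S : AddSubmonoid R} (f : B → A) {p : B → R} (hp : ∀ b, p b ∈ S) (a : A) :
    marginal f p a ∈ S :=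
  sum_mem fun b _ ↦ by
    split_ifs
    exacts [hp b, zero_mem S]

end Marginal

theorem isMaxOn_iff_of_image_eq_of_eq_sub_const {X Z R : Type*} [AddGroup R] [Preorder R]
    [AddRightMono R] {e : X → Z} {s : Set X} {t : Set Z} {f : X → R} {F : Z → R} {c : R}
    (hst : e '' s = t) (hf : ∀ x, f x = F (e x) - c) (x : X) :
    IsMaxOn f s x ↔ IsMaxOn F t (e x) := by
  simp only [← hst, isMaxOn_iff, Set.forall_mem_image, hf, sub_le_sub_iff_right]

section Polytopes

variable {I L : Type*} {A : I → Type*} {Ij : L → Finset I}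
  (Bj : ∀ j, Finset (∀ i : Ij j, A i)) {Y : Finset I} {α₀ : ∀ i, A i} {t : I → L}
  {R : Type*}

/-- The coordinates `(ḡ, p)` of the linear program with one variable for every symbol at every
variable node. -/
abbrev FullPoint (R : Type*) : Type _ :=
  (∀ i, A i → R) × (∀ j, Bj j → R)

/-- The coordinates `(g̃, p)` of the reduced linear program: only the nodes in `Y` carry variables,
and the one for the symbol `α₀ i` is omitted. -/
abbrev ReducedPoint (Y : Finset I) (α₀ : ∀ i, A i) (R : Type*) : Type _ :=
  (∀ i : Y, {a // a ≠ α₀ i} → R) × (∀ j, Bj j → R)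

/-- The map forgetting the coordinates of `ḡ` at the omitted symbols and outside `Y`. -/
def restrictPoint (Y : Finset I) (α₀ : ∀ i, A i) (q : FullPoint Bj R) :
    ReducedPoint Bj Y α₀ R :=
  (fun i a ↦ q.1 i a, q.2)

variable [∀ i, DecidableEq (A i)]

variable {Bj} in
/-- The marginal at the variable node `i` of a weight on the local behaviour of an adjacent factor
node `j`. -/
def nodeMarginal [AddCommMonoid R] {i : I} {j : L} (hij : i ∈ Ij j) (p : Bj j → R) : A i → R :=
  marginal (fun b : Bj j ↦ b.1 ⟨i, hij⟩) p

variable {Bj} in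
theorem sum_nodeMarginal [AddCommMonoid R] {i : I} [Fintype (A i)] {j : L} (hij : i ∈ Ij j)
    (p : Bj j → R) : ∑ a, nodeMarginal hij p a = ∑ b, p b :=
  sum_marginal _ p

/-- The polytope `Q` of probability weights on the local behaviours that agree on the variable
nodes, recorded together with their common marginals. -/
def fullPolytope (R : Type*) [Ring R] [LE R] : Set (FullPoint Bj R) :=
  {q | (∀ j b, 0 ≤ q.2 j b) ∧ (∀ j, ∑ b, q.2 j b = 1) ∧
    ∀ (j : L) (i : I) (hij : i ∈ Ij j) (a : A i), q.1 i a = nodeMarginal hij (q.2 j) a}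

/-- The polytope `Q̃`, which imposes agreement off the omitted symbols only; at a variable node
`i ∉ Y` the marginals are compared with that of the reference factor node `t i`. -/
def reducedPolytope (α₀ : ∀ i, A i) (ht : ∀ i ∉ Y, i ∈ Ij (t i)) (R : Type*) [Ring R] [LE R] :
    Set (ReducedPoint Bj Y α₀ R) :=
  {q | (∀ j b, 0 ≤ q.2 j b) ∧ (∀ j, ∑ b, q.2 j b = 1) ∧
    (∀ (i : I) (hi : i ∈ Y) (j : L) (hij : i ∈ Ij j) (a : A i) (ha : a ≠ α₀ i),
      q.1 ⟨i, hi⟩ ⟨a, ha⟩ = nodeMarginal hij (q.2 j) a) ∧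
    ∀ (i : I) (hi : i ∉ Y) (j : L) (hij : i ∈ Ij j), j ≠ t i → ∀ a : A i, a ≠ α₀ i →
      nodeMarginal hij (q.2 j) a = nodeMarginal (ht i hi) (q.2 (t i)) a}

theorem restrictPoint_mem_reducedPolytope [Ring R] [LE R] (ht : ∀ i ∉ Y, i ∈ Ij (t i))
    {q : FullPoint Bj R} (hq : q ∈ fullPolytope Bj R) :
    restrictPoint Bj Y α₀ q ∈ reducedPolytope Bj α₀ ht R :=
  ⟨hq.1, hq.2.1, fun i _ j hij a _ ↦ hq.2.2 j i hij a,
    fun i hi j hij _ a _ ↦ (hq.2.2 j i hij a).symm.trans (hq.2.2 (t i) i (ht i hi) a)⟩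

variable [∀ i, Fintype (A i)]

/-- The cost `λ·g` for arbitrary weights `w` at the nodes in `Y`; in the decoding problem
`w i a = log h_i(a)`. -/
def fullCost [Ring R] (Y : Finset I) (w g : ∀ i, A i → R) : R :=
  ∑ i ∈ Y, ∑ a, w i a * g i a

/-- The cost `λ̃·g̃` whose weights are those of `w` relative to the omitted symbols. -/
def reducedCost [Ring R] (w : ∀ i, A i → R) (g : ∀ i : Y, {a // a ≠ α₀ i} → R) : R :=
  ∑ i : Y, ∑ a : {a // a ≠ α₀ i}, (w i a - w i (α₀ i)) * g i a

theorem sum_log_div_mul_eq_reducedCost {h : ∀ i, A i → ℝ} (hpos : ∀ i ∈ Y, ∀ a, 0 < h i a)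
    (g : ∀ i : Y, {a // a ≠ α₀ i} → ℝ) :
    ∑ i : Y, ∑ a : {a // a ≠ α₀ i}, Real.log (h i a / h i (α₀ i)) * g i a =
      reducedCost (fun i a ↦ Real.log (h i a)) g :=
  Fintype.sum_congr _ _ fun i ↦ Fintype.sum_congr _ _ fun a ↦ by
    rw [Real.log_div (hpos i i.2 a).ne' (hpos i i.2 _).ne']

variable [DecidableEq I] (ht : ∀ i ∉ Y, i ∈ Ij (t i))

/-- The map `V` from reduced to full coordinates. It fills in the omitted symbols by total mass
one, and the nodes outside `Y` by the marginals at their reference factor nodes. -/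
def expandPoint [Ring R] (q : ReducedPoint Bj Y α₀ R) : FullPoint Bj R :=
  (fun i a ↦
    if hi : i ∈ Y then extendToSumOne (α₀ i) (q.1 ⟨i, hi⟩) a
    else nodeMarginal (ht i hi) (q.2 (t i)) a,
  q.2)

section Ring

variable [Ring R] (q : ReducedPoint Bj Y α₀ R)

theorem expandPoint_fst_of_mem {i : I} (hi : i ∈ Y) :
    (expandPoint Bj ht q).1 i = extendToSumOne (α₀ i) (q.1 ⟨i, hi⟩) :=
  funext fun _ ↦ dif_pos hi

theorem expandPoint_fst_of_notMem {i : I} (hi : i ∉ Y) :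
    (expandPoint Bj ht q).1 i = nodeMarginal (ht i hi) (q.2 (t i)) :=
  funext fun _ ↦ dif_neg hi

theorem reducedCost_eq_fullCost_expandPoint_sub (w : ∀ i, A i → R) :
    reducedCost w q.1 = fullCost Y w (expandPoint Bj ht q).1 - ∑ i ∈ Y, w i (α₀ i) := by
  rw [fullCost, ← sum_sub_distrib, ← sum_coe_sort Y]
  refine Fintype.sum_congr _ _ fun i ↦ ?_
  rw [expandPoint_fst_of_mem Bj ht q i.2]
  exact sum_sub_mul_eq_sum_mul_extendToSumOne_sub (w i) (q.1 i)

variable {q} in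
theorem expandPoint_mem_addSubgroup_iff {S : AddSubgroup R} (hS : 1 ∈ S) :
    ((∀ i a, (expandPoint Bj ht q).1 i a ∈ S) ∧ ∀ j b, (expandPoint Bj ht q).2 j b ∈ S) ↔
      (∀ i a, q.1 i a ∈ S) ∧ ∀ j b, q.2 j b ∈ S := by
  refine and_congr_left fun hp ↦ ⟨fun hg i ↦ ?_, fun hg i ↦ ?_⟩
  · rw [← forall_extendToSumOne_mem_iff hS, ← expandPoint_fst_of_mem Bj ht q i.2]
    exact hg i
  · by_cases hi : i ∈ Y
    · rw [expandPoint_fst_of_mem Bj ht q hi, forall_extendToSumOne_mem_iff hS]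
      exact hg ⟨i, hi⟩
    · rw [expandPoint_fst_of_notMem Bj ht q hi]
      exact marginal_mem (S := S.toAddSubmonoid) _ (hp (t i))

variable {q} in
theorem expandPoint_mem_fullPolytope [LE R] (hq : q ∈ reducedPolytope Bj α₀ ht R) :
    expandPoint Bj ht q ∈ fullPolytope Bj R := by
  obtain ⟨hnonneg, hsum, hmem, hnotMem⟩ := hq
  refine ⟨hnonneg, hsum, fun j i hij ↦ congrFun ?_⟩
  have sum_one {j : L} (hij : i ∈ Ij j) : ∑ a, nodeMarginal hij (q.2 j) a = 1 :=
    (sum_nodeMarginal hij _).trans (hsum j)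
  by_cases hi : i ∈ Y
  · rw [expandPoint_fst_of_mem Bj ht q hi]
    exact extendToSumOne_eq_of_sum_eq_one (sum_one hij) fun a ↦ hmem i hi j hij a a.2
  · rw [expandPoint_fst_of_notMem Bj ht q hi]
    obtain rfl | hj := eq_or_ne j (t i)
    · rfl
    -- Both marginals are the extension of their common restriction.
    · rw [← extendToSumOne_eq_of_sum_eq_one (a₀ := α₀ i) (sum_one (ht i hi)) fun _ ↦ rfl]
      exact extendToSumOne_eq_of_sum_eq_one (sum_one hij) fun a ↦
        (hnotMem i hi j hij hj a a.2).symm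

theorem expandPoint_restrictPoint [LE R] (hY : ∀ i ∈ Y, ∃ j, i ∈ Ij j) {q : FullPoint Bj R}
    (hq : q ∈ fullPolytope Bj R) :
    expandPoint Bj ht (restrictPoint Bj Y α₀ q) = q := by
  obtain ⟨-, hsum, hmarginal⟩ := hq
  refine Prod.ext (funext fun i ↦ ?_) rfl
  by_cases hi : i ∈ Y
  · obtain ⟨j, hij⟩ := hY i hi
    have sum_one : ∑ a, q.1 i a = 1 := by
      rw [funext (hmarginal j i hij), sum_nodeMarginal, hsum]
    rw [expandPoint_fst_of_mem Bj ht _ hi]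
    exact extendToSumOne_eq_of_sum_eq_one sum_one fun _ ↦ rfl
  · rw [expandPoint_fst_of_notMem Bj ht _ hi]
    exact (funext (hmarginal (t i) i (ht i hi))).symm

theorem expandPoint_image_reducedPolytope [LE R] (hY : ∀ i ∈ Y, ∃ j, i ∈ Ij j) :
    expandPoint Bj ht '' reducedPolytope Bj α₀ ht R = fullPolytope Bj R :=
  Set.Subset.antisymm (Set.image_subset_iff.2 fun _ ↦ expandPoint_mem_fullPolytope Bj ht)
    fun q hq ↦ ⟨restrictPoint Bj Y α₀ q, restrictPoint_mem_reducedPolytope Bj ht hq,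
      expandPoint_restrictPoint Bj ht hY hq⟩

theorem stmt_11_general [Preorder R] [AddRightMono R] (hY : ∀ i ∈ Y, ∃ j, i ∈ Ij j)
    (w : ∀ i, A i → R) :
    reducedCost w q.1 = fullCost Y w (expandPoint Bj ht q).1 - ∑ i ∈ Y, w i (α₀ i) ∧
    (IsMaxOn (fun q ↦ reducedCost w q.1) (reducedPolytope Bj α₀ ht R) q ↔
      IsMaxOn (fun q ↦ fullCost Y w q.1) (fullPolytope Bj R) (expandPoint Bj ht q)) ∧
    (((∀ i a, ∃ z : ℤ, q.1 i a = z) ∧ ∀ j b, ∃ z : ℤ, q.2 j b = z) ↔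
      (∀ i a, ∃ z : ℤ, (expandPoint Bj ht q).1 i a = z) ∧
        ∀ j b, ∃ z : ℤ, (expandPoint Bj ht q).2 j b = z) := by
  refine ⟨reducedCost_eq_fullCost_expandPoint_sub Bj ht q w, ?_, ?_⟩
  · exact isMaxOn_iff_of_image_eq_of_eq_sub_const (expandPoint_image_reducedPolytope Bj ht hY)
      (fun q ↦ reducedCost_eq_fullCost_expandPoint_sub Bj ht q w) q
  · have one_mem_int : (1 : R) ∈ (Int.castAddHom R).range := ⟨1, Int.cast_one⟩
    simpa only [AddMonoidHom.mem_range, Int.coe_castAddHom, eq_comm] using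
      (expandPoint_mem_addSubgroup_iff Bj ht one_mem_int).symm

end Ring

end Polytopes

/-- Theorem 1, equivalence of the two relaxed LPs: For every
`(g̃, p) ∈ Q̃` with `(ḡ, p) = V(g̃, p) ∈ Q`, the costs satisfy
`λ̃·g̃ = λ·g − Σ_{i∈Y} log h_i(α_i)`; consequently `(g̃*, p*)` maximizes `λ̃·g̃`
over `Q̃` if and only if `V(g̃*, p*)` maximizes `λ·g` over `Q`, and `(g̃*, p*)`
is integral if and only if `V(g̃*, p*)` is integral. Hence the two linear
programs produce the same output (configuration or failure). -/
theorem stmt_11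
    {I : Type} [Fintype I] [DecidableEq I]
    (A : I → Type) [∀ i, Fintype (A i)] [∀ i, DecidableEq (A i)]
    (hcard : ∀ i, 2 ≤ Fintype.card (A i))
    {L : Type} [Fintype L]
    (Ij : L → Finset I) (hIj : ∀ j, (Ij j).Nonempty)
    (Bj : ∀ j : L, Finset (∀ i : Ij j, A i.1)) (hBj : ∀ j, (Bj j).Nonempty)
    -- every variable node is connected to at least one non-pendant factor node
    (hJ : ∀ i : I, ∃ j : L, i ∈ Ij j)
    (Y : Finset I)
    (h : ∀ i, A i → ℝ) (hpos : ∀ i ∈ Y, ∀ a, 0 < h i a)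
    -- the distinguished elements α_i
    (α₀ : ∀ i, A i)
    -- the distinguished factor indices t_i ∈ J_i for i ∈ I\Y
    (t : I → L) (ht : ∀ i ∉ Y, i ∈ Ij (t i))
    -- the polytope Q̃, as a set of pairs (g̃, p)
    (Qt : Set ((∀ i : Y, {γ : A i.1 // γ ≠ α₀ i.1} → ℝ)
      × (∀ j : L, {b // b ∈ Bj j} → ℝ)))
    (hQt : Qt = {gp | (∀ j b, 0 ≤ gp.2 j b)
      ∧ (∀ j : L, ∑ b : Bj j, gp.2 j b = 1)
      ∧ (∀ (i : I) (hiY : i ∈ Y) (j : L) (hij : i ∈ Ij j)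
          (α : A i) (hα : α ≠ α₀ i),
          gp.1 ⟨i, hiY⟩ ⟨α, hα⟩ =
            ∑ b : Bj j, if b.1 ⟨i, hij⟩ = α then gp.2 j b else 0)
      ∧ (∀ (i : I) (hiY : i ∉ Y) (j : L) (hij : i ∈ Ij j), j ≠ t i →
          ∀ (α : A i), α ≠ α₀ i →
          (∑ b : Bj j, if b.1 ⟨i, hij⟩ = α then gp.2 j b else 0) =
            ∑ b : Bj (t i), if b.1 ⟨i, ht i hiY⟩ = α then gp.2 (t i) b else 0)})
    -- the polytope Q, as a set of pairs (ḡ, p)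
    (Q : Set ((∀ i : I, A i → ℝ) × (∀ j : L, {b // b ∈ Bj j} → ℝ)))
    (hQ : Q = {gp | (∀ j b, 0 ≤ gp.2 j b)
      ∧ (∀ j : L, ∑ b : Bj j, gp.2 j b = 1)
      ∧ (∀ (j : L) (i : I) (hij : i ∈ Ij j) (α : A i),
          gp.1 i α = ∑ b : Bj j, if b.1 ⟨i, hij⟩ = α then gp.2 j b else 0)})
    -- the map V
    (V : ((∀ i : Y, {γ : A i.1 // γ ≠ α₀ i.1} → ℝ)
        × (∀ j : L, {b // b ∈ Bj j} → ℝ))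
      → ((∀ i : I, A i → ℝ) × (∀ j : L, {b // b ∈ Bj j} → ℝ)))
    (hV2 : ∀ gp, (V gp).2 = gp.2)
    (hV1 : ∀ gp (i : I) (α : A i), (V gp).1 i α =
      if hiY : i ∈ Y then
        (if hα : α = α₀ i
          then 1 - ∑ β : {γ : A i // γ ≠ α₀ i}, gp.1 ⟨i, hiY⟩ β
          else gp.1 ⟨i, hiY⟩ ⟨α, hα⟩)
      else ∑ b : Bj (t i), if b.1 ⟨i, ht i hiY⟩ = α then gp.2 (t i) b else 0)
    -- the cost functionals
    (cost : (∀ i : I, A i → ℝ) → ℝ)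
    (hcost : ∀ g, cost g = ∑ i ∈ Y, ∑ α : A i, Real.log (h i α) * g i α)
    (costt : (∀ i : Y, {γ : A i.1 // γ ≠ α₀ i.1} → ℝ) → ℝ)
    (hcostt : ∀ gt, costt gt = ∑ i : Y, ∑ α : {γ : A i.1 // γ ≠ α₀ i.1},
      Real.log (h i.1 α.1 / h i.1 (α₀ i.1)) * gt i α) :
    -- cost relation on Q̃
    (∀ gp ∈ Qt, costt gp.1 = cost (V gp).1 - ∑ i ∈ Y, Real.log (h i (α₀ i)))
    -- equivalence of maximizers
    ∧ (∀ gp ∈ Qt,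
        ((∀ gp' ∈ Qt, costt gp'.1 ≤ costt gp.1) ↔
          (∀ gp' ∈ Q, cost gp'.1 ≤ cost (V gp).1)))
    -- equivalence of integrality
    ∧ (∀ gp ∈ Qt,
        (((∀ (i : Y) (α : {γ : A i.1 // γ ≠ α₀ i.1}), ∃ z : ℤ, gp.1 i α = z)
            ∧ ∀ (j : L) (b : Bj j), ∃ z : ℤ, gp.2 j b = z) ↔
          ((∀ (i : I) (α : A i), ∃ z : ℤ, (V gp).1 i α = z)
            ∧ ∀ (j : L) (b : Bj j), ∃ z : ℤ, (V gp).2 j b = z))) := by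
  obtain rfl : V = expandPoint Bj ht :=
    funext fun gp ↦ Prod.ext (funext₂ (hV1 gp)) (hV2 gp)
  obtain rfl : cost = fullCost Y fun i a ↦ Real.log (h i a) := funext hcost
  obtain rfl : costt = reducedCost fun i a ↦ Real.log (h i a) :=
    funext fun g ↦ (hcostt g).trans (sum_log_div_mul_eq_reducedCost hpos g)
  obtain rfl : Qt = reducedPolytope Bj α₀ ht ℝ := hQt
  obtain rfl : Q = fullPolytope Bj ℝ := hQ
  have general (gp : ReducedPoint Bj Y α₀ ℝ) :=
    stmt_11_general Bj ht gp (fun i _ ↦ hJ i) fun i a ↦ Real.log (h i a)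
  exact ⟨fun gp _ ↦ (general gp).1, fun gp _ ↦ (general gp).2.1, fun gp _ ↦ (general gp).2.2⟩
end

section
/- (Theorem 2, reverse direction.) Let (ḡ, p) ∈ Q have all coordinates rational. Then there exist a positive integer M, permutations Π_{j,i} of S = {1,…,M} for each j ∈ L, i ∈ I_j, and a valid cover configuration x^{(M)} of degree M such that g_i^{(α)} = |{l ∈ S : x_{i,l} = α}|/M for all i ∈ I, α ∈ A_i, and p_{j,b} = |{l ∈ S : x_{j,l} = b}|/M for all j ∈ L, b ∈ B_j. Thus every rational LP pseudoconfiguration arises as the normalized vector of a graph-cover pseudoconfiguration. -/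
open Finset

/-!
Clear denominators: `p j b = n j b / M` with `n j b : ℕ`, so that `∑ b, n j b = M` and `B_j` can be
listed as `y j : S → B_j` with each `b` occurring `n j b` times. The number of `l` with
`(y j l)_i = α` is `M * g i α`, the same for all factor nodes `j` adjacent to `i`. Hence the
sequences `l ↦ (y j l)_i` for different `j` are rearrangements of each other: take one of them as
`x i`, and the rearrangements as the permutations `Π_{j,i}`, so that `x_{j,l} = y j l`.
-/

section Counting

variable {ι κ β : Type*} [Fintype ι] [DecidableEq β]

lemma card_filter_comp_eq_sum [Fintype β] (y : ι → β) (P : β → Prop) [DecidablePred P] :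
    #{l | P (y l)} = ∑ b, if P b then #{l | y l = b} else 0 := by
  rw [← sum_filter, sum_card_fiberwise_eq_card_filter]
  simp only [mem_filter_univ]

lemma exists_fun_card_filter_eq [Fintype β] (n : β → ℕ) (hn : ∑ b, n b = Fintype.card ι) :
    ∃ y : ι → β, ∀ b, #{l | y l = b} = n b := by
  let e : ι ≃ Σ b, Fin (n b) := Fintype.equivOfCardEq (by simp [hn])
  refine ⟨fun l => (e l).1, fun b => ?_⟩
  let fiberEquiv : {l // (e l).1 = b} ≃ Fin (n b) :=
    (e.subtypeEquiv fun _ => Iff.rfl).trans (Equiv.sigmaSubtype b)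
  rw [← Fintype.card_subtype, Fintype.card_congr fiberEquiv, Fintype.card_fin]

lemma exists_equiv_comp_eq_of_card_filter_eq [Fintype κ] (f : ι → β) (g : κ → β)
    (h : ∀ b, #{l | f l = b} = #{k | g k = b}) : ∃ e : ι ≃ κ, g ∘ e = f := by
  simp only [← Fintype.card_subtype] at h
  exact ⟨Equiv.ofFiberEquiv fun b => Fintype.equivOfCardEq (h b),
    funext (Equiv.ofFiberEquiv_map _)⟩

end Counting

lemma exists_nat_div_eq_of_nonneg_of_rat {κ K : Type*} [Finite κ] [Field K] [LinearOrder K]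
    [IsStrictOrderedRing K] (p : κ → K) (hp0 : ∀ k, 0 ≤ p k) (hprat : ∀ k, ∃ q : ℚ, p k = q) :
    ∃ M : ℕ, 0 < M ∧ ∃ n : κ → ℕ, ∀ k, p k = n k / M := by
  have hpnnrat : ∀ k, ∃ q : ℚ≥0, p k = q := fun k => by
    obtain ⟨q, hq⟩ := hprat k
    lift q to ℚ≥0 using by exact_mod_cast hq ▸ hp0 k
    exact ⟨q, by simpa using hq⟩
  choose q hq using hpnnrat
  obtain ⟨⟨M, hM⟩, hMq⟩ := IsLocalization.exist_integer_multiples_of_finite (nonZeroDivisors ℕ) q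
  have hM0 : M ≠ 0 := nonZeroDivisors.ne_zero hM
  choose n hn using hMq
  refine ⟨M, hM0.pos, n, fun k => ?_⟩
  have hnk : (n k : ℚ≥0) = M * q k := by simpa using hn k
  rw [hq k, eq_div_iff (by exact_mod_cast hM0), mul_comm]
  exact_mod_cast hnk.symm

section Cover

variable {I ι : Type*} {A : I → Type*}

/-- The local configuration `x_{j,l} = (x_{i,Π_{j,i}(l)})_{i ∈ I_j}` that the cover configuration
`x` induces at the `l`-th copy of a factor node `j`, with `s = I_j` and `σ i = Π_{j,i}`. The copies
are indexed by `ι`, in place of `S = {1,…,M}`. -/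
def localConfig {s : Set I} (σ : s → Equiv.Perm ι) (x : ∀ i, ι → A i) (l : ι) (i : s) : A i :=
  x i (σ i l)

variable [Fintype ι] [∀ i, DecidableEq (A i)]

lemma card_filter_eq_sum_card_localConfig {s : Set I} [DecidableEq (∀ i : s, A i)]
    {B : Finset (∀ i : s, A i)} {σ : s → Equiv.Perm ι} {x : ∀ i, ι → A i}
    (hx : ∀ l, localConfig σ x l ∈ B) (i : s) (α : A i) :
    #{l | x i l = α} = ∑ b : B, if b.1 i = α then #{l | localConfig σ x l = b.1} else 0 := by
  calc #{l | x i l = α} = #{l | localConfig σ x l i = α} :=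
        (card_equiv (σ i) fun l => by rw [mem_filter_univ, mem_filter_univ, localConfig]).symm
    _ = _ := by
        simpa only [Subtype.ext_iff] using card_filter_comp_eq_sum
          (fun l => (⟨localConfig σ x l, hx l⟩ : B)) (fun b => b.1 i = α)

variable {L : Type*} {N : L → Set I}

lemma exists_localConfig_eq (hN : ∀ i, ∃ j, i ∈ N j) (y : ∀ j, ι → ∀ i : N j, A i)
    (hy : ∀ j j' i (hj : i ∈ N j) (hj' : i ∈ N j') (α : A i),
      #{l | y j l ⟨i, hj⟩ = α} = #{l | y j' l ⟨i, hj'⟩ = α}) :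
    ∃ (σ : ∀ j, N j → Equiv.Perm ι) (x : ∀ i, ι → A i), ∀ j, localConfig (σ j) x = y j := by
  choose j₀ hj₀ using hN
  choose σ hσ using fun j (i : N j) =>
    exists_equiv_comp_eq_of_card_filter_eq _ _ (hy j (j₀ i) i i.2 (hj₀ i))
  exact ⟨σ, fun i l => y (j₀ i) l ⟨i, hj₀ i⟩, fun j => funext₂ fun l i => congrFun (hσ j i) l⟩

lemma exists_cover_card_localConfig_eq [∀ j, DecidableEq (∀ i : N j, A i)]
    (hN : ∀ i, ∃ j, i ∈ N j) (B : ∀ j, Finset (∀ i : N j, A i)) (n : ∀ j, B j → ℕ)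
    (hn : ∀ j, ∑ b, n j b = Fintype.card ι)
    (hmarginal : ∀ j j' i (hj : i ∈ N j) (hj' : i ∈ N j') (α : A i),
      (∑ b : B j, if b.1 ⟨i, hj⟩ = α then n j b else 0) =
        ∑ b : B j', if b.1 ⟨i, hj'⟩ = α then n j' b else 0) :
    ∃ (σ : ∀ j, N j → Equiv.Perm ι) (x : ∀ i, ι → A i),
      (∀ j l, localConfig (σ j) x l ∈ B j) ∧
        ∀ j (b : B j), #{l | localConfig (σ j) x l = b.1} = n j b := by
  choose y hy using fun j => exists_fun_card_filter_eq (n j) (hn j)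
  have card_coord : ∀ j i (hj : i ∈ N j) (α : A i), #{l | (y j l).1 ⟨i, hj⟩ = α} =
      ∑ b : B j, if b.1 ⟨i, hj⟩ = α then n j b else 0 := fun j i hj α => by
    simp only [card_filter_comp_eq_sum (y j) (fun b => b.1 ⟨i, hj⟩ = α), hy]
  obtain ⟨σ, x, hx⟩ := exists_localConfig_eq hN (fun j l => (y j l).1)
    fun j j' i hj hj' α => by simp only [card_coord, hmarginal j j' i hj hj' α]
  refine ⟨σ, x, fun j l => hx j ▸ (y j l).2, fun j b => ?_⟩
  simp only [hx, ← hy, Subtype.ext_iff]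

theorem stmt_13_general [Finite L] [∀ j, DecidableEq (∀ i : N j, A i)]
    {K : Type*} [Field K] [LinearOrder K] [IsStrictOrderedRing K]
    (hN : ∀ i, ∃ j, i ∈ N j) (B : ∀ j, Finset (∀ i : N j, A i))
    (g : ∀ i, A i → K) (p : ∀ j, B j → K)
    (hp0 : ∀ j b, 0 ≤ p j b) (hp1 : ∀ j, ∑ b, p j b = 1)
    (hg : ∀ j i (hj : i ∈ N j) (α : A i),
      g i α = ∑ b : B j, if b.1 ⟨i, hj⟩ = α then p j b else 0)
    (hprat : ∀ j b, ∃ q : ℚ, p j b = q) :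
    ∃ M : ℕ, 0 < M ∧ ∃ (σ : ∀ j, N j → Equiv.Perm (Fin M)) (x : ∀ i, Fin M → A i),
      (∀ j l, localConfig (σ j) x l ∈ B j) ∧
        (∀ i α, g i α = (#{l | x i l = α} : K) / M) ∧
        ∀ j (b : B j), p j b = (#{l | localConfig (σ j) x l = b.1} : K) / M := by
  obtain ⟨M, hM, n, hn⟩ := exists_nat_div_eq_of_nonneg_of_rat
    (fun k : Σ j, B j => p k.1 k.2) (fun k => hp0 k.1 k.2) (fun k => hprat k.1 k.2)
  have hp : ∀ j b, p j b = n ⟨j, b⟩ / M := fun j b => hn ⟨j, b⟩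
  have hMK : (M : K) ≠ 0 := by exact_mod_cast hM.ne'
  have hsum : ∀ j, ∑ b, n ⟨j, b⟩ = Fintype.card (Fin M) := fun j => by
    have h := hp1 j
    simp only [hp, ← sum_div, div_eq_one_iff_eq hMK] at h
    rw [Fintype.card_fin]
    exact_mod_cast h
  have hgn : ∀ j i (hj : i ∈ N j) (α : A i),
      g i α = ((∑ b : B j, if b.1 ⟨i, hj⟩ = α then n ⟨j, b⟩ else 0 : ℕ) : K) / M :=
    fun j i hj α => by
      simp only [hg j i hj α, hp, Nat.cast_sum, Nat.cast_ite, Nat.cast_zero, sum_div, ite_div,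
        zero_div]
  obtain ⟨σ, x, hvalid, hcard⟩ := exists_cover_card_localConfig_eq hN B (fun j b => n ⟨j, b⟩) hsum
    fun j j' i hj hj' α => by
      exact_mod_cast (div_left_inj' hMK).1 ((hgn j i hj α).symm.trans (hgn j' i hj' α))
  refine ⟨M, hM, σ, x, hvalid, fun i α => ?_, fun j b => by rw [hp, hcard]⟩
  obtain ⟨j, hj⟩ := hN i
  simp only [hgn j i hj α, card_filter_eq_sum_card_localConfig (hvalid j) ⟨i, hj⟩ α, hcard]

end Cover

/-- Theorem 2, reverse direction: Let `(ḡ, p) ∈ Q` have all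
coordinates rational. Then there exist a positive integer `M`, permutations
`Π_{j,i}` of `S = {1,…,M}`, and a valid cover configuration `x^{(M)}` of degree
`M` such that `g_i^{(α)} = |{l ∈ S : x_{i,l} = α}|/M` for all `i, α` and
`p_{j,b} = |{l ∈ S : x_{j,l} = b}|/M` for all `j, b`. Thus every rational LP
pseudoconfiguration arises as the normalized vector of a graph-cover
pseudoconfiguration. -/
theorem stmt_13
    {I : Type} [Fintype I] [DecidableEq I]
    (A : I → Type) [∀ i, Fintype (A i)] [∀ i, DecidableEq (A i)]
    (hcard : ∀ i, 2 ≤ Fintype.card (A i))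
    {L : Type} [Fintype L]
    (Ij : L → Finset I) (hIj : ∀ j, (Ij j).Nonempty)
    (Bj : ∀ j : L, Finset (∀ i : Ij j, A i.1))
    -- every variable node is connected to at least one non-pendant factor node
    (hJ : ∀ i : I, ∃ j : L, i ∈ Ij j)
    -- a point (ḡ, p) of Q
    (g : ∀ i : I, A i → ℝ)
    (p : ∀ j : L, {b // b ∈ Bj j} → ℝ)
    (hp0 : ∀ j b, 0 ≤ p j b)
    (hp1 : ∀ j : L, ∑ b : Bj j, p j b = 1)
    (hg : ∀ (j : L) (i : I) (hij : i ∈ Ij j) (α : A i),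
      g i α = ∑ b : Bj j, if b.1 ⟨i, hij⟩ = α then p j b else 0)
    -- all coordinates are rational
    (hgrat : ∀ (i : I) (α : A i), ∃ q : ℚ, g i α = q)
    (hprat : ∀ (j : L) (b : Bj j), ∃ q : ℚ, p j b = q) :
    ∃ (M : ℕ), 0 < M ∧
      ∃ (Pm : ∀ j : L, ∀ i : Ij j, Equiv.Perm (Fin M))
        (x : ∀ i : I, Fin M → A i),
        (∀ (j : L) (l : Fin M), (fun i : Ij j => x i.1 (Pm j i l)) ∈ Bj j)
        ∧ (∀ (i : I) (α : A i),
            g i α = ((univ.filter fun l : Fin M => x i l = α).card : ℝ) / M)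
        ∧ (∀ (j : L) (b : Bj j),
            p j b = ((univ.filter fun l : Fin M =>
              (fun i : Ij j => x i.1 (Pm j i l)) = b.1).card : ℝ) / M) :=
  stmt_13_general (N := fun j => (Ij j : Set I)) hJ Bj g p hp0 hp1 hg hprat
end
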